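/- There exists a 2-(24,4,1) packing with 42 blocks whose leave is a vertex-disjoint union of five cycles of length 3 and one cycle of length 9, covering all 24 points (leave type 3^5 9^1). -/

import Mathlib

/-!
A packing with 42 blocks covers 42 · 6 of the 276 pairs of points, so its leave has 24 edges. A
disjoint union of cycles through all 24 points also has 24 edges, so it is the leave as soon as none
of its edges lies in a block.

The packing used here is invariant under translation by 8 modulo 24, which permutes three of the
triangles of the leave cyclically, rotates each of the other two, and rotates the 9-cycle by three
steps. Its 42 blocks are the translates of 14 base blocks.
-/

/-- A 2-(24,4,1) packing: a collection of 4-element blocks on 24 points such that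
every pair of distinct points lies in at most one block. -/
def IsPacking (B : Finset (Finset (Fin 24))) : Prop :=
  (∀ b ∈ B, b.card = 4) ∧
  ∀ p q : Fin 24, p ≠ q → ∀ b₁ ∈ B, ∀ b₂ ∈ B,
    p ∈ b₁ → q ∈ b₁ → p ∈ b₂ → q ∈ b₂ → b₁ = b₂

/-- Adjacency in the leave of a packing: the pair of distinct points is covered by no block. -/
def LeaveAdj (B : Finset (Finset (Fin 24))) (p q : Fin 24) : Prop :=
  p ≠ q ∧ ∀ b ∈ B, ¬ (p ∈ b ∧ q ∈ b)

/-- The leave of the packing `B` is a vertex-disjoint union of cycles whose lengths are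
given by the list `L`, covering all 24 points. -/
def LeaveIsCycleType (B : Finset (Finset (Fin 24))) (L : List ℕ) : Prop :=
  ∃ f : (i : Fin L.length) → ZMod (L.get i) → Fin 24,
    Function.Bijective (fun x : Σ i : Fin L.length, ZMod (L.get i) => f x.1 x.2) ∧
    ∀ p q : Fin 24, LeaveAdj B p q ↔
      ∃ i k, (p = f i k ∧ q = f i (k + 1)) ∨ (q = f i k ∧ p = f i (k + 1))

open Finset Function

theorem injective_of_card_inter_le_one {ι α : Type*} [DecidableEq α] {b : ι → Finset α}
    (hcard : ∀ i, 1 < #(b i)) (hinter : Pairwise fun i j => #(b i ∩ b j) ≤ 1) : Injective b := by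
  intro i j hij
  by_contra hne
  have h : #(b i ∩ b j) ≤ 1 := hinter hne
  rw [← hij, inter_self] at h
  exact (hcard i).not_ge h

theorem isPacking_image {ι : Type*} [Fintype ι] {b : ι → Finset (Fin 24)}
    (hcard : ∀ i, #(b i) = 4) (hinter : Pairwise fun i j => #(b i ∩ b j) ≤ 1) :
    IsPacking (univ.image b) := by
  simp only [IsPacking, forall_mem_image, mem_univ, true_imp_iff]
  refine ⟨hcard, fun p q hpq i j hpi hqi hpj hqj => ?_⟩
  by_contra hne
  exact hpq (card_le_one.mp (hinter (ne_of_apply_ne b hne)) p (mem_inter.mpr ⟨hpi, hpj⟩)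
    q (mem_inter.mpr ⟨hqi, hqj⟩))

theorem exists_perm_apply_eq_of_bijective {ι α : Type*} {A : ι → Type*} {f : ∀ i, A i → α}
    (hf : Bijective fun x : Σ i, A i => f x.1 x.2) (τ : ∀ i, Equiv.Perm (A i)) :
    ∃ σ : Equiv.Perm α, ∀ i k, σ (f i k) = f i (τ i k) := by
  let e := Equiv.ofBijective _ hf
  refine ⟨e.permCongr (Equiv.sigmaCongrRight τ), fun i k => ?_⟩
  have he : e.symm (f i k) = ⟨i, k⟩ := e.symm_apply_apply ⟨i, k⟩
  rw [Equiv.permCongr_apply, he]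
  rfl

theorem zmod_add_one_add_one_ne_self {n : ℕ} (hn : 3 ≤ n) (k : ZMod n) : k + 1 + 1 ≠ k := by
  intro h
  rw [add_assoc, one_add_one_eq_two, add_eq_left] at h
  have hdvd : n ∣ 2 := (ZMod.natCast_eq_zero_iff 2 n).mp (mod_cast h)
  exact absurd (Nat.le_of_dvd two_pos hdvd) (by lia)

section Leave

variable {B : Finset (Finset (Fin 24))} {p q : Fin 24}

instance : DecidableRel (LeaveAdj B) :=
  fun _ _ => inferInstanceAs (Decidable (_ ∧ _))

theorem LeaveAdj.symm (h : LeaveAdj B p q) : LeaveAdj B q p :=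
  ⟨h.1.symm, fun b hb hqp => h.2 b hb hqp.symm⟩

theorem filter_leaveAdj_eq_sdiff :
    ({x | LeaveAdj B x.1 x.2} : Finset (Fin 24 × Fin 24)) = univ.offDiag \ B.biUnion offDiag := by
  ext ⟨p, q⟩
  rw [mem_filter_univ]
  simp only [LeaveAdj, mem_sdiff, mem_offDiag, mem_univ, true_and, mem_biUnion]
  grind

theorem IsPacking.pairwiseDisjoint_offDiag (hB : IsPacking B) :
    (B : Set (Finset (Fin 24))).PairwiseDisjoint offDiag := by
  refine fun b₁ hb₁ b₂ hb₂ hne => disjoint_left.mpr fun ⟨p, q⟩ h₁ h₂ => hne ?_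
  obtain ⟨hp₁, hq₁, hpq⟩ := mem_offDiag.mp h₁
  obtain ⟨hp₂, hq₂, -⟩ := mem_offDiag.mp h₂
  exact hB.2 p q hpq b₁ hb₁ b₂ hb₂ hp₁ hq₁ hp₂ hq₂

theorem IsPacking.card_biUnion_offDiag (hB : IsPacking B) :
    #(B.biUnion offDiag) = #B * 12 := by
  rw [card_biUnion hB.pairwiseDisjoint_offDiag]
  exact sum_const_nat fun b hb => by rw [offDiag_card, hB.1 b hb]

theorem IsPacking.card_filter_leaveAdj (hB : IsPacking B) :
    #{x : Fin 24 × Fin 24 | LeaveAdj B x.1 x.2} = 24 * 23 - #B * 12 := by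
  have hsub : B.biUnion offDiag ⊆ univ.offDiag :=
    biUnion_subset.mpr fun b _ => offDiag_mono (subset_univ b)
  rw [filter_leaveAdj_eq_sdiff, card_sdiff_of_subset hsub, hB.card_biUnion_offDiag, offDiag_card,
    card_univ, Fintype.card_fin]

theorem IsPacking.leaveAdj_iff_of_perm (hB : IsPacking B) (hcard : #B = 42)
    {σ : Equiv.Perm (Fin 24)} (hσ : ∀ p, σ (σ p) ≠ p) (hleave : ∀ p, LeaveAdj B p (σ p)) :
    LeaveAdj B p q ↔ q = σ p ∨ p = σ q := by
  let arcs : Finset (Fin 24 × Fin 24) := univ.image fun p => (p, σ p)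
  let reversed : Finset (Fin 24 × Fin 24) := univ.image fun p => (σ p, p)
  have hdisj : Disjoint arcs reversed := by
    simp only [arcs, reversed, disjoint_left, mem_image, mem_univ, true_and]
    rintro _ ⟨p, rfl⟩ ⟨q, hq⟩
    obtain ⟨rfl, hqp⟩ := Prod.mk.inj hq
    exact hσ q hqp.symm
  have harcs : #arcs = 24 := by
    rw [card_image_of_injective _ fun _ _ h => (Prod.mk.inj h).1, card_univ, Fintype.card_fin]
  have hreversed : #reversed = 24 := by
    rw [card_image_of_injective _ fun _ _ h => (Prod.mk.inj h).2, card_univ, Fintype.card_fin]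
  have hsub : arcs ∪ reversed ⊆ ({x | LeaveAdj B x.1 x.2} : Finset (Fin 24 × Fin 24)) := by
    simp only [arcs, reversed, union_subset_iff, image_subset_iff, mem_filter_univ]
    exact ⟨fun p _ => hleave p, fun p _ => (hleave p).symm⟩
  have heq := eq_of_subset_of_card_le hsub <| by
    rw [hB.card_filter_leaveAdj, hcard, card_union_of_disjoint hdisj, harcs, hreversed]
  have hmem : (p, q) ∈ arcs ∪ reversed ↔ LeaveAdj B p q := by rw [heq, mem_filter_univ]
  rw [← hmem]
  simp [arcs, reversed, eq_comm]

theorem IsPacking.leaveIsCycleType (hB : IsPacking B) (hcard : #B = 42) {L : List ℕ}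
    (hL : ∀ i, 3 ≤ L.get i) {f : (i : Fin L.length) → ZMod (L.get i) → Fin 24}
    (hf : Bijective fun x : Σ i, ZMod (L.get i) => f x.1 x.2)
    (hleave : ∀ i k, LeaveAdj B (f i k) (f i (k + 1))) : LeaveIsCycleType B L := by
  obtain ⟨σ, hσ⟩ : ∃ σ : Equiv.Perm (Fin 24), ∀ i k, σ (f i k) = f i (k + 1) :=
    exists_perm_apply_eq_of_bijective hf fun _ => Equiv.addRight 1
  have hσσ (p) : σ (σ p) ≠ p := by
    obtain ⟨⟨i, k⟩, rfl⟩ := hf.surjective p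
    intro h
    rw [hσ, hσ] at h
    have hk : k + 1 + 1 = k := (hf.injective.comp sigma_mk_injective) h
    exact zmod_add_one_add_one_ne_self (hL i) k hk
  have hσleave (p) : LeaveAdj B p (σ p) := by
    obtain ⟨⟨i, k⟩, rfl⟩ := hf.surjective p
    exact (hσ i k).symm ▸ hleave i k
  have hsucc (p q) : (∃ i k, p = f i k ∧ q = f i (k + 1)) ↔ q = σ p := by
    constructor
    · rintro ⟨i, k, rfl, rfl⟩
      exact (hσ i k).symm
    · rintro rfl
      obtain ⟨⟨i, k⟩, rfl⟩ := hf.surjective p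
      exact ⟨i, k, rfl, hσ i k⟩
  refine ⟨f, hf, fun p q => ?_⟩
  rw [hB.leaveAdj_iff_of_perm hcard hσσ hσleave, ← hsucc p q, ← hsucc q p]
  simp only [exists_or]

end Leave

/-- Representatives of the orbits of the blocks of the packing under translation by 8. -/
def baseBlock : Fin 14 → Finset (Fin 24) :=
  ![{0, 1, 2, 6}, {0, 3, 14, 23}, {0, 4, 7, 18}, {0, 5, 12, 22}, {0, 9, 11, 20},
    {0, 10, 15, 17}, {0, 13, 19, 21}, {1, 4, 5, 20}, {1, 7, 10, 21}, {1, 11, 14, 19},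
    {1, 13, 15, 22}, {2, 5, 10, 19}, {2, 14, 20, 22}, {3, 7, 15, 20}]

open scoped Pointwise in
/-- The blocks of the packing: `block (s, i)` is the translate of the `i`-th base block by `8 * s`
modulo 24. -/
def block : Fin 3 × Fin 14 → Finset (Fin 24)
  | (s, i) => (![0, 8, 16] s : Fin 24) +ᵥ baseBlock i

/-- The cycles of the leave, each given by its consecutive vertices. -/
def leaveCycle : (i : Fin [3, 3, 3, 3, 3, 9].length) → ZMod ([3, 3, 3, 3, 3, 9].get i) → Fin 24
  | 0 => ![0, 8, 16]
  | 1 => ![1, 9, 17]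
  | 2 => ![2, 3, 4]
  | 3 => ![10, 11, 12]
  | 4 => ![18, 19, 20]
  | 5 => ![5, 6, 7, 13, 14, 15, 21, 22, 23]

theorem card_block : ∀ x, #(block x) = 4 := by
  decide +kernel

theorem pairwise_card_block_inter_le_one : Pairwise fun x y => #(block x ∩ block y) ≤ 1 := by
  unfold Pairwise
  decide +kernel

theorem injective_block : Injective block :=
  injective_of_card_inter_le_one (fun x => by simp only [card_block, Nat.one_lt_ofNat])
    pairwise_card_block_inter_le_one

theorem card_image_block : #(univ.image block) = 42 := by
  rw [card_image_of_injective _ injective_block]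
  rfl

theorem isPacking_image_block : IsPacking (univ.image block) :=
  isPacking_image card_block pairwise_card_block_inter_le_one

instance (i : Fin [3, 3, 3, 3, 3, 9].length) : NeZero ([3, 3, 3, 3, 3, 9].get i) :=
  ⟨by revert i; decide⟩

theorem bijective_leaveCycle :
    Bijective fun x : Σ i, ZMod ([3, 3, 3, 3, 3, 9].get i) => leaveCycle x.1 x.2 := by
  decide +kernel

theorem leaveAdj_leaveCycle :
    ∀ i k, LeaveAdj (univ.image block) (leaveCycle i k) (leaveCycle i (k + 1)) := by
  simp only [LeaveAdj, forall_mem_image, mem_univ, true_imp_iff]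
  decide +kernel

/-- There is a 2-(24,4,1) packing with 42 blocks whose leave is a vertex-disjoint
union of cycles of lengths [3, 3, 3, 3, 3, 9], covering all 24 points. -/
theorem exists_max_packing_with_leave_type :
    ∃ B : Finset (Finset (Fin 24)), IsPacking B ∧ B.card = 42 ∧
      LeaveIsCycleType B [3, 3, 3, 3, 3, 9] :=
  ⟨univ.image block, isPacking_image_block, card_image_block,
    isPacking_image_block.leaveIsCycleType card_image_block (by decide) bijective_leaveCycle
      leaveAdj_leaveCycle⟩
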